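/- Let u ∈ BV(ℝⁿ, γ) be bounded, γ standard Gaussian, T_t the Ornstein–Uhlenbeck semigroup. Then ∫ |T_t u − u| dγ ≤ c_t |D_γ u|(ℝⁿ) with c_t = √(2/π)∫₀ᵗ e^{-s}/√(1−e^{-2s}) ds. -/

import Mathlib

open MeasureTheory Real
open scoped RealInnerProductSpace

noncomputable def stdGaussian (n : ℕ) : Measure (EuclideanSpace ℝ (Fin n)) :=
  volume.withDensity fun x => ENNReal.ofReal ((2 * π) ^ (-(n : ℝ) / 2) * Real.exp (-‖x‖ ^ 2 / 2))

def IsC1b {E : Type*} [NormedAddCommGroup E] [NormedSpace ℝ E] (φ : E → ℝ) : Prop :=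
  ContDiff ℝ 1 φ ∧ ∃ C, ∀ x, |φ x| ≤ C ∧ ‖fderiv ℝ φ x‖ ≤ C

def IsGaussDeriv (n : ℕ) (u : EuclideanSpace ℝ (Fin n) → ℝ)
    (σ : Measure (EuclideanSpace ℝ (Fin n)))
    (ν : EuclideanSpace ℝ (Fin n) → EuclideanSpace ℝ (Fin n)) : Prop :=
  IsFiniteMeasure σ ∧ (∀ᵐ x ∂σ, ‖ν x‖ = 1) ∧
  ∀ φ : EuclideanSpace ℝ (Fin n) → ℝ, IsC1b φ → ∀ h,
    ∫ x, u x * fderiv ℝ φ x h ∂(stdGaussian n) =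
      -∫ x, φ x * ⟪ν x, h⟫ ∂σ + ∫ x, u x * φ x * ⟪h, x⟫ ∂(stdGaussian n)

/-!
The rotations `R_θ (x, y) = (cos θ x + sin θ y, -sin θ x + cos θ y)` preserve `γ ⊗ γ`, and
`T_t u x` is the average over `y` of `u` at the first component of `R_θ (x, y)`, with
`θ = arccos (e⁻ᵗ)`. By Jensen's inequality, invariance and duality with test functions `φ`, it
suffices to bound the derivative in `θ` of `∫ u(x) φ(R_θ (x, y)) d(γ ⊗ γ)`. With `ψ = φ ∘ R_θ` this
derivative is `∫ u(x) (⟨∇ₓψ, y⟩ - ⟨∇_yψ, x⟩) d(γ ⊗ γ)`. Gaussian integration by parts in `y` turns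
the second term into `∫ u(x) ⟨x, y⟩ ψ`, which cancels the drift term in the definition of `D_γ u`
tested against `ψ(·, y)` in the direction `y`. What is left is `-∫∫ ψ(x, y) ⟨ν x, y⟩ dσ(x) dγ(y)`,
which is at most `√(2/π) |D_γ u|(ℝⁿ)` because `⟨e, Y⟩` is standard normal for unit vectors `e`.
Finally, `√(2/π) arccos (e⁻ᵗ)` is `c_t`.
-/

section StandardGaussian

variable {E : Type*} [NormedAddCommGroup E] [InnerProductSpace ℝ E]

/-- The density of the standard Gaussian measure on the Euclidean space `E` with respect to
Lebesgue measure. -/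
noncomputable def stdGaussianPDF (x : E) : ℝ :=
  (2 * π) ^ (-(Module.finrank ℝ E : ℝ) / 2) * rexp (-‖x‖ ^ 2 / 2)

lemma stdGaussianPDF_nonneg (x : E) : 0 ≤ stdGaussianPDF x := by
  unfold stdGaussianPDF
  positivity

lemma hasFDerivAt_stdGaussianPDF (x : E) :
    HasFDerivAt stdGaussianPDF (-stdGaussianPDF x • innerSL ℝ x) x := by
  have h := ((hasStrictFDerivAt_norm_sq x).hasFDerivAt.const_mul (-1 / 2)).exp.const_mul
    ((2 * π) ^ (-(Module.finrank ℝ E : ℝ) / 2))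
  refine (h.congr_fderiv ?_).congr_of_eventuallyEq (.of_forall fun y => ?_)
  · ext y
    simp only [stdGaussianPDF, smul_smul, ← Nat.cast_smul_eq_nsmul ℝ, smul_apply, smul_eq_mul]
    push_cast
    ring_nf
  · simp only [stdGaussianPDF]
    ring_nf

lemma continuous_stdGaussianPDF : Continuous (stdGaussianPDF : E → ℝ) :=
  continuous_iff_continuousAt.2 fun x => (hasFDerivAt_stdGaussianPDF x).continuousAt

lemma stdGaussianPDF_smul_cexp_inner (x w : E) :
    stdGaussianPDF x • Complex.exp (⟪x, w⟫ * Complex.I) =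
      ((2 * π) ^ (-(Module.finrank ℝ E : ℝ) / 2) : ℝ) *
        Complex.exp (-(1 / 2 : ℂ) * ‖x‖ ^ 2 + Complex.I * ⟪w, x⟫) := by
  rw [stdGaussianPDF, Complex.real_smul, Complex.ofReal_mul, mul_assoc, Complex.ofReal_exp,
    ← Complex.exp_add, real_inner_comm]
  push_cast
  ring_nf

variable [FiniteDimensional ℝ E] [MeasurableSpace E] [BorelSpace E]

lemma integrable_stdGaussianPDF : Integrable (stdGaussianPDF : E → ℝ) := by
  have h := (GaussianFourier.integrable_cexp_neg_mul_sq_norm_add (b := (1 / 2 : ℂ)) (by norm_num)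
    Complex.I (0 : E)).const_mul ((2 * π) ^ (-(Module.finrank ℝ E : ℝ) / 2) : ℝ)
  simp_rw [← stdGaussianPDF_smul_cexp_inner] at h
  exact h.norm.congr (ae_of_all _ fun x => by simp [abs_of_nonneg (stdGaussianPDF_nonneg x)])

lemma integral_stdGaussianPDF_smul_cexp_inner (w : E) :
    ∫ x, stdGaussianPDF x • Complex.exp (⟪x, w⟫ * Complex.I) = Complex.exp (-‖w‖ ^ 2 / 2) := by
  simp_rw [stdGaussianPDF_smul_cexp_inner]
  rw [integral_const_mul, GaussianFourier.integral_cexp_neg_mul_sq_norm_add (by norm_num),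
    ← mul_assoc]
  have hnormalize : (((2 * π) ^ (-(Module.finrank ℝ E : ℝ) / 2) : ℝ) : ℂ) *
      (π / (1 / 2 : ℂ)) ^ (Module.finrank ℝ E / 2 : ℂ) = 1 := by
    have hbase : (π / (1 / 2 : ℂ)) ^ (Module.finrank ℝ E / 2 : ℂ) =
        (((2 * π) ^ ((Module.finrank ℝ E : ℝ) / 2) : ℝ) : ℂ) := by
      rw [Complex.ofReal_cpow (by positivity)]
      push_cast
      ring_nf
    rw [hbase, ← Complex.ofReal_mul, ← Real.rpow_add (by positivity), neg_div, neg_add_cancel,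
      Real.rpow_zero, Complex.ofReal_one]
  rw [hnormalize, one_mul, Complex.I_sq]
  ring_nf

lemma integral_withDensity_stdGaussianPDF {F : Type*} [NormedAddCommGroup F] [NormedSpace ℝ F]
    (f : E → F) :
    ∫ x, f x ∂volume.withDensity (fun x : E => ENNReal.ofReal (stdGaussianPDF x)) =
      ∫ x, stdGaussianPDF x • f x := by
  rw [integral_withDensity_eq_integral_toReal_smul
    (continuous_stdGaussianPDF.measurable.ennreal_ofReal) (by simp)]
  simp_rw [ENNReal.toReal_ofReal (stdGaussianPDF_nonneg _)]

lemma withDensity_stdGaussianPDF :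
    volume.withDensity (fun x : E => ENNReal.ofReal (stdGaussianPDF x)) =
      ProbabilityTheory.stdGaussian E := by
  have := isFiniteMeasure_withDensity_ofReal (integrable_stdGaussianPDF (E := E)).2
  refine Measure.ext_of_charFun (funext fun w => ?_)
  rw [ProbabilityTheory.charFun_stdGaussian, charFun_apply, integral_withDensity_stdGaussianPDF,
    integral_stdGaussianPDF_smul_cexp_inner]

lemma integral_stdGaussian_eq_integral_pdf_smul {F : Type*} [NormedAddCommGroup F]
    [NormedSpace ℝ F] (f : E → F) :
    ∫ x, f x ∂(ProbabilityTheory.stdGaussian E) = ∫ x, stdGaussianPDF x • f x := by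
  rw [← withDensity_stdGaussianPDF, integral_withDensity_stdGaussianPDF]

lemma integrable_stdGaussian_iff_integrable_pdf_smul {F : Type*} [NormedAddCommGroup F]
    [NormedSpace ℝ F] {f : E → F} :
    Integrable f (ProbabilityTheory.stdGaussian E) ↔
      Integrable (fun x => stdGaussianPDF x • f x) := by
  rw [← withDensity_stdGaussianPDF, integrable_withDensity_iff_integrable_smul'
    (continuous_stdGaussianPDF.measurable.ennreal_ofReal) (by simp)]
  simp_rw [ENNReal.toReal_ofReal (stdGaussianPDF_nonneg _)]

lemma integral_fderiv_stdGaussian {ψ : E → ℝ} {h : E} (hψ : Differentiable ℝ ψ)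
    (hψi : Integrable ψ (ProbabilityTheory.stdGaussian E))
    (hψ' : Integrable (fun x => fderiv ℝ ψ x h) (ProbabilityTheory.stdGaussian E))
    (hψh : Integrable (fun x => ψ x * ⟪h, x⟫) (ProbabilityTheory.stdGaussian E)) :
    ∫ x, fderiv ℝ ψ x h ∂(ProbabilityTheory.stdGaussian E) =
      ∫ x, ψ x * ⟪h, x⟫ ∂(ProbabilityTheory.stdGaussian E) := by
  have hpdf (x : E) : fderiv ℝ stdGaussianPDF x h * ψ x =
      -(stdGaussianPDF x * (ψ x * ⟪h, x⟫)) := by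
    rw [(hasFDerivAt_stdGaussianPDF x).fderiv, smul_apply, innerSL_apply_apply, real_inner_comm,
      smul_eq_mul]
    ring
  rw [integrable_stdGaussian_iff_integrable_pdf_smul] at hψi hψ' hψh
  simp_rw [integral_stdGaussian_eq_integral_pdf_smul, smul_eq_mul]
  rw [integral_mul_fderiv_eq_neg_fderiv_mul_of_integrable _ hψ' hψi
    (fun x _ => (hasFDerivAt_stdGaussianPDF x).differentiableAt) (fun x _ => hψ x)]
  · simp_rw [hpdf, integral_neg, neg_neg]
  · simp_rw [hpdf]
    exact hψh.neg

lemma integral_abs_gaussianReal :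
    ∫ x, |x| ∂(ProbabilityTheory.gaussianReal 0 1) = √(2 / π) := by
  have hpdf (x : ℝ) : ProbabilityTheory.gaussianPDFReal 0 1 x • |x| =
      (√(2 * π))⁻¹ * (|x| * rexp (-(1 / 2) * |x| ^ 2)) := by
    simp only [ProbabilityTheory.gaussianPDFReal, NNReal.coe_one, sub_zero, smul_eq_mul, sq_abs]
    ring_nf
  have hhalf : ∫ x in Set.Ioi (0 : ℝ), x * rexp (-(1 / 2) * x ^ 2) = 1 := by
    have hpow := integral_rpow_mul_exp_neg_mul_rpow (p := 2) (q := 1) (b := 1 / 2) two_pos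
      (by norm_num) (by norm_num)
    have hval : (1 / 2 : ℝ) ^ (-((1 : ℝ) + 1) / 2) * (1 / 2) * Gamma ((1 + 1) / 2) = 1 := by
      norm_num
    simpa only [rpow_one, rpow_two, hval] using hpow
  have hsqrt : (√(2 * π))⁻¹ * 2 = √(2 / π) := by
    rw [Real.sqrt_mul zero_le_two, Real.sqrt_div zero_le_two, mul_inv, mul_right_comm,
      inv_mul_eq_div, Real.div_sqrt, div_eq_mul_inv]
  rw [ProbabilityTheory.integral_gaussianReal_eq_integral_smul one_ne_zero]
  simp_rw [hpdf]
  rw [integral_const_mul, integral_comp_abs (f := fun x => x * rexp (-(1 / 2) * x ^ 2)), hhalf,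
    mul_one, hsqrt]

lemma map_inner_stdGaussian (e : E) :
    (ProbabilityTheory.stdGaussian E).map (fun y => ⟪e, y⟫) =
      (ProbabilityTheory.gaussianReal 0 1).map (fun x => ‖e‖ * x) := by
  have h := ProbabilityTheory.IsGaussian.map_eq_gaussianReal
    (μ := ProbabilityTheory.stdGaussian E) (innerSL ℝ e)
  rw [ProbabilityTheory.integral_strongDual_stdGaussian,
    ProbabilityTheory.variance_dual_stdGaussian, innerSL_apply_norm] at h
  rw [ProbabilityTheory.gaussianReal_map_const_mul, mul_zero, mul_one]
  convert! h using 2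
  exact (Real.toNNReal_of_nonneg _).symm

lemma integral_abs_inner_stdGaussian (e : E) :
    ∫ y, |⟪e, y⟫| ∂(ProbabilityTheory.stdGaussian E) = √(2 / π) * ‖e‖ := by
  calc ∫ y, |⟪e, y⟫| ∂(ProbabilityTheory.stdGaussian E)
    _ = ∫ x, |x| ∂(ProbabilityTheory.stdGaussian E).map (fun y => ⟪e, y⟫) :=
      (integral_map (by fun_prop) (by fun_prop)).symm
    _ = ∫ x, |‖e‖ * x| ∂(ProbabilityTheory.gaussianReal 0 1) := by
      rw [map_inner_stdGaussian, integral_map (by fun_prop) (by fun_prop)]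
    _ = √(2 / π) * ‖e‖ := by
      simp_rw [abs_mul, abs_norm]
      rw [integral_const_mul, integral_abs_gaussianReal, mul_comm]

lemma abs_integral_integral_mul_inner_le {σ : Measure E} [SFinite σ] {ν : E → E}
    (hν : Integrable ν σ) {ψ : E × E → ℝ} (hψ : ∀ p, |ψ p| ≤ 1) :
    |∫ y, ∫ x, ψ (x, y) * ⟪ν x, y⟫ ∂σ ∂(ProbabilityTheory.stdGaussian E)| ≤
      √(2 / π) * ∫ x, ‖ν x‖ ∂σ := by
  have hinner : Integrable (fun p : E × E => |⟪ν p.2, p.1⟫|)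
      ((ProbabilityTheory.stdGaussian E).prod σ) := by
    have hmeas : AEStronglyMeasurable (fun p : E × E => ⟪ν p.2, p.1⟫)
        ((ProbabilityTheory.stdGaussian E).prod σ) :=
      AEStronglyMeasurable.inner (𝕜 := ℝ) hν.1.comp_snd measurable_fst.aestronglyMeasurable
    refine (ProbabilityTheory.IsGaussian.integrable_fun_id.norm.mul_prod hν.norm).mono'
      hmeas.norm (ae_of_all _ fun p => ?_)
    rw [norm_eq_abs, abs_abs, mul_comm]
    exact abs_real_inner_le_norm _ _
  calc |∫ y, ∫ x, ψ (x, y) * ⟪ν x, y⟫ ∂σ ∂(ProbabilityTheory.stdGaussian E)|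
    _ ≤ ∫ y, ∫ x, |⟪ν x, y⟫| ∂σ ∂(ProbabilityTheory.stdGaussian E) := by
      rw [← Real.norm_eq_abs]
      refine norm_integral_le_of_norm_le hinner.integral_prod_left (ae_of_all _ fun y => ?_)
      refine norm_integral_le_of_norm_le (hν.inner_const (𝕜 := ℝ) y).abs
        (ae_of_all _ fun x => ?_)
      rw [norm_mul]
      exact mul_le_of_le_one_left (abs_nonneg _) (hψ _)
    _ = ∫ x, ∫ y, |⟪ν x, y⟫| ∂(ProbabilityTheory.stdGaussian E) ∂σ :=
      integral_integral_swap hinner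
    _ = √(2 / π) * ∫ x, ‖ν x‖ ∂σ := by
      simp_rw [integral_abs_inner_stdGaussian]
      exact integral_const_mul _ _

end StandardGaussian

section IsC1b

variable {E F : Type*} [NormedAddCommGroup E] [NormedSpace ℝ E]
  [NormedAddCommGroup F] [NormedSpace ℝ F] {φ ψ : E → ℝ}

lemma IsC1b.differentiable (hφ : IsC1b φ) : Differentiable ℝ φ := hφ.1.differentiable one_ne_zero

lemma IsC1b.continuous (hφ : IsC1b φ) : Continuous φ := hφ.1.continuous

lemma IsC1b.continuous_fderiv (hφ : IsC1b φ) : Continuous (fderiv ℝ φ) :=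
  hφ.1.continuous_fderiv one_ne_zero

lemma isC1b_const (c : ℝ) : IsC1b fun _ : E => c :=
  ⟨contDiff_const, |c|, fun x => by simp⟩

lemma IsC1b.add (hφ : IsC1b φ) (hψ : IsC1b ψ) : IsC1b fun x => φ x + ψ x := by
  obtain ⟨K, hK⟩ := hφ.2
  obtain ⟨L, hL⟩ := hψ.2
  refine ⟨hφ.1.add hψ.1, K + L, fun x => ⟨?_, ?_⟩⟩
  · exact (abs_add_le _ _).trans (add_le_add (hK x).1 (hL x).1)
  · rw [fderiv_fun_add (hφ.differentiable x) (hψ.differentiable x)]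
    exact (norm_add_le _ _).trans (add_le_add (hK x).2 (hL x).2)

lemma IsC1b.hasFDerivAt_comp {f : F → E} {L : F →L[ℝ] E} {x : F} (hφ : IsC1b φ)
    (hf : HasFDerivAt f L x) : HasFDerivAt (fun x => φ (f x)) ((fderiv ℝ φ (f x)).comp L) x :=
  (hφ.differentiable (f x)).hasFDerivAt.comp x hf

lemma IsC1b.comp_of_hasFDerivAt_const {f : F → E} {L : F →L[ℝ] E} (hφ : IsC1b φ)
    (hf : ∀ x, HasFDerivAt f L x) : IsC1b fun x => φ (f x) := by
  obtain ⟨K, hK⟩ := hφ.2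
  have hf1 : ContDiff ℝ 1 f := contDiff_one_iff_hasFDerivAt.2 ⟨fun _ => L, continuous_const, hf⟩
  refine ⟨hφ.1.comp hf1, max K (K * ‖L‖), fun x => ⟨(hK _).1.trans (le_max_left _ _), ?_⟩⟩
  rw [(hφ.hasFDerivAt_comp (hf x)).fderiv]
  calc ‖(fderiv ℝ φ (f x)).comp L‖ ≤ ‖fderiv ℝ φ (f x)‖ * ‖L‖ :=
        ContinuousLinearMap.opNorm_comp_le _ _
    _ ≤ K * ‖L‖ := by gcongr; exact (hK _).2
    _ ≤ max K (K * ‖L‖) := le_max_right _ _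

end IsC1b

section Smoothing

open scoped Convolution

variable {E : Type*} [NormedAddCommGroup E] [MeasurableSpace E] {ρ : Measure E}

lemma norm_convolution_le_of_norm_le {F G H : Type*} [NormedAddCommGroup F] [NormedSpace ℝ F]
    [NormedAddCommGroup G] [NormedSpace ℝ G] [NormedAddCommGroup H] [NormedSpace ℝ H]
    (L : F →L[ℝ] G →L[ℝ] H) {f : E → F} {s : E → G} {C : ℝ} (hf : Integrable f ρ)
    (hs : ∀ x, ‖s x‖ ≤ C) (x : E) :
    ‖(f ⋆[L, ρ] s) x‖ ≤ ‖L‖ * (∫ y, ‖f y‖ ∂ρ) * C := by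
  rw [convolution_def, mul_assoc, ← integral_mul_const, ← integral_const_mul]
  refine norm_integral_le_of_norm_le ((hf.norm.mul_const C).const_mul ‖L‖)
    (ae_of_all _ fun y => (L.le_opNorm₂ _ _).trans ?_)
  rw [mul_assoc]
  gcongr
  exact hs _

variable [NormedSpace ℝ E] [FiniteDimensional ℝ E] [BorelSpace E] [ρ.IsAddHaarMeasure] {s : E → ℝ}

lemma isC1b_convolution_left {f : E → ℝ} {C : ℝ} (hfs : HasCompactSupport f)
    (hf : ContDiff ℝ 1 f) (hsm : LocallyIntegrable s ρ) (hs : ∀ x, |s x| ≤ C) :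
    IsC1b (f ⋆[ContinuousLinearMap.lsmul ℝ ℝ, ρ] s) := by
  have hf' : Integrable (fderiv ℝ f) ρ :=
    (hf.continuous_fderiv one_ne_zero).integrable_of_hasCompactSupport (hfs.fderiv ℝ)
  have hbound := norm_convolution_le_of_norm_le (ρ := ρ) (s := s)
    (ContinuousLinearMap.lsmul ℝ ℝ) (hf.continuous.integrable_of_hasCompactSupport hfs) hs
  have hbound' := norm_convolution_le_of_norm_le (s := s)
    ((ContinuousLinearMap.lsmul ℝ ℝ).precompL E) hf' hs
  refine ⟨hfs.contDiff_convolution_left _ hf hsm, _, fun x =>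
    ⟨(hbound x).trans (le_max_left _ _), Eq.trans_le ?_ ((hbound' x).trans (le_max_right _ _))⟩⟩
  rw [(hfs.hasFDerivAt_convolution_left _ hf hsm x).fderiv]

lemma abs_convolution_normed_le (b : ContDiffBump (0 : E)) {C : ℝ} (hs : ∀ x, |s x| ≤ C) (x : E) :
    |(b.normed ρ ⋆[ContinuousLinearMap.lsmul ℝ ℝ, ρ] s) x| ≤ C := by
  refine (norm_convolution_le_of_norm_le (ρ := ρ) (s := s)
    (ContinuousLinearMap.lsmul ℝ ℝ) b.integrable_normed hs x).trans ?_
  simp_rw [Real.norm_of_nonneg (b.nonneg_normed _)]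
  rw [b.integral_normed, mul_one]
  exact mul_le_of_le_one_left ((abs_nonneg _).trans (hs 0))
    ContinuousLinearMap.opNorm_lsmul_le

lemma exists_seq_isC1b_tendsto_ae {C : ℝ} (hsm : AEStronglyMeasurable s ρ)
    (hs : ∀ x, |s x| ≤ C) :
    ∃ φ : ℕ → E → ℝ, (∀ k, IsC1b (φ k)) ∧ (∀ k x, |φ k x| ≤ C) ∧
      ∀ᵐ x ∂ρ, Filter.Tendsto (fun k => φ k x) Filter.atTop (nhds (s x)) := by
  let b : ℕ → ContDiffBump (0 : E) := fun k =>
    ⟨1 / (k + 1), 2 * (1 / (k + 1)), by positivity, lt_two_mul_self (by positivity)⟩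
  have hb : Filter.Tendsto (fun k => (b k).rOut) Filter.atTop (nhds 0) := by
    simpa [b] using tendsto_one_div_add_atTop_nhds_zero_nat.const_mul (2 : ℝ)
  have hloc : LocallyIntegrable s ρ :=
    (memLp_top_of_bound hsm C (ae_of_all _ hs)).locallyIntegrable le_top
  refine ⟨fun k => (b k).normed ρ ⋆[ContinuousLinearMap.lsmul ℝ ℝ, ρ] s, fun k => ?_, fun k =>
    abs_convolution_normed_le (b k) hs, ?_⟩
  · exact isC1b_convolution_left (b k).hasCompactSupport_normed (b k).contDiff_normed hloc hs
  · exact ContDiffBump.ae_convolution_tendsto_right_of_locallyIntegrable hb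
      (.of_forall fun _ => le_rfl) hloc

lemma integral_abs_le_of_forall_isC1b {μ : Measure E} (hμ : μ ≪ ρ) {g : E → ℝ} {M : ℝ}
    (hg : Integrable g μ)
    (hM : ∀ φ, IsC1b φ → (∀ x, |φ x| ≤ 1) → ∫ x, g x * φ x ∂μ ≤ M) :
    ∫ x, |g x| ∂μ ≤ M := by
  let s : E → ℝ := fun x => if 0 ≤ hg.1.mk g x then 1 else -1
  have hsm : Measurable s :=
    .ite (measurableSet_le measurable_const hg.1.stronglyMeasurable_mk.measurable)
      measurable_const measurable_const
  have hs : ∀ x, |s x| ≤ 1 := fun x => by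
    simp only [s]
    split_ifs <;> simp
  have hgs : (fun x => |g x|) =ᵐ[μ] fun x => g x * s x := by
    filter_upwards [hg.1.ae_eq_mk] with x hx
    simp only [s, ← hx]
    split_ifs with h
    · rw [abs_of_nonneg h, mul_one]
    · rw [abs_of_neg (not_le.1 h), mul_neg_one]
  obtain ⟨φ, hφ, hφ1, hlim⟩ := exists_seq_isC1b_tendsto_ae (ρ := ρ) hsm.aestronglyMeasurable hs
  rw [integral_congr_ae hgs]
  refine le_of_tendsto' (tendsto_integral_of_dominated_convergence (fun x => |g x|)
    (fun k => hg.1.mul (hφ k).continuous.aestronglyMeasurable) hg.abs (fun k => ?_) ?_)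
    fun k => hM _ (hφ k) (hφ1 k)
  · refine ae_of_all _ fun x => ?_
    exact (norm_mul_le _ _).trans (mul_le_of_le_one_right (norm_nonneg _) (hφ1 k x))
  · filter_upwards [hμ.ae_le hlim] with x hx using hx.const_mul _

end Smoothing

section Integrability

variable {E : Type*} [NormedAddCommGroup E] [NormedSpace ℝ E] [MeasurableSpace E]
  [BorelSpace E] {μ : Measure E} {φ f : E → ℝ}

lemma IsC1b.integrable_mul (hφ : IsC1b φ) (hf : Integrable f μ) :
    Integrable (fun x => f x * φ x) μ := by
  obtain ⟨K, hK⟩ := hφ.2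
  exact hf.mul_bdd hφ.continuous.aestronglyMeasurable (ae_of_all _ fun x => (hK x).1)

lemma IsC1b.integrable_mul_fderiv [FiniteDimensional ℝ E] (hφ : IsC1b φ) {v : E → E}
    (hfv : Integrable (fun x => f x • v x) μ) :
    Integrable (fun x => f x * fderiv ℝ φ x (v x)) μ := by
  obtain ⟨K, hK⟩ := hφ.2
  have hmeas : AEStronglyMeasurable (fun x => fderiv ℝ φ x (f x • v x)) μ :=
    (ContinuousLinearMap.apply ℝ ℝ).aestronglyMeasurable_comp₂ hfv.1
      hφ.continuous_fderiv.aestronglyMeasurable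
  simp_rw [map_smul, smul_eq_mul] at hmeas
  refine (hfv.norm.const_mul K).mono' hmeas (ae_of_all _ fun x => ?_)
  rw [← smul_eq_mul, ← map_smul]
  exact ((fderiv ℝ φ x).le_opNorm _).trans (by gcongr; exact (hK x).2)

end Integrability

section IntegrationByParts

variable {E : Type*} [NormedAddCommGroup E] [InnerProductSpace ℝ E] [FiniteDimensional ℝ E]
  [MeasurableSpace E] [BorelSpace E]

lemma IsC1b.integral_fderiv_stdGaussian {ψ : E → ℝ} (hψ : IsC1b ψ) (h : E) :
    ∫ x, fderiv ℝ ψ x h ∂(ProbabilityTheory.stdGaussian E) =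
      ∫ x, ψ x * ⟪h, x⟫ ∂(ProbabilityTheory.stdGaussian E) := by
  have hinner : Integrable (fun x => ⟪h, x⟫) (ProbabilityTheory.stdGaussian E) :=
    ProbabilityTheory.IsGaussian.integrable_fun_id.const_inner (𝕜 := ℝ) h
  refine _root_.integral_fderiv_stdGaussian hψ.differentiable ?_ ?_ ?_
  · simpa only [one_mul] using hψ.integrable_mul (integrable_const 1)
  · simpa only [one_mul] using hψ.integrable_mul_fderiv (f := fun _ => 1) (v := fun _ => h)
      (integrable_const _)
  · simpa only [mul_comm] using hψ.integrable_mul hinner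

lemma integrable_mul_inner {μ ρ : Measure E} {u : E → ℝ}
    (hxu : Integrable (fun x => u x • x) μ) (hρ : Integrable (fun y => y) ρ) :
    Integrable (fun p : E × E => u p.1 * ⟪p.1, p.2⟫) (μ.prod ρ) := by
  have hmeas : AEStronglyMeasurable (fun p : E × E => ⟪u p.1 • p.1, p.2⟫) (μ.prod ρ) :=
    AEStronglyMeasurable.inner (𝕜 := ℝ) hxu.1.comp_fst measurable_snd.aestronglyMeasurable
  simp_rw [← real_inner_smul_left]
  exact (hxu.norm.mul_prod hρ.norm).mono' hmeas (ae_of_all _ fun p => norm_inner_le_norm _ _)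

lemma IsC1b.integrable_mul_fderiv_snd {μ ρ : Measure E} [IsFiniteMeasure ρ] {u : E → ℝ}
    (hxu : Integrable (fun x => u x • x) μ) {ψ : E × E → ℝ} (hψ : IsC1b ψ) :
    Integrable (fun p => u p.1 * fderiv ℝ ψ p (0, p.1)) (μ.prod ρ) := by
  refine hψ.integrable_mul_fderiv (f := fun p => u p.1) (v := fun p => (0, p.1)) ?_
  simp only [Prod.smul_mk, smul_zero]
  exact (integrable_zero _ _ _).prodMk (hxu.comp_fst _)

lemma IsC1b.integral_mul_fderiv_snd {μ : Measure E} [SFinite μ] {u : E → ℝ}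
    (hxu : Integrable (fun x => u x • x) μ) {ψ : E × E → ℝ} (hψ : IsC1b ψ) :
    ∫ p, u p.1 * fderiv ℝ ψ p (0, p.1) ∂(μ.prod (ProbabilityTheory.stdGaussian E)) =
      ∫ p, u p.1 * ⟪p.1, p.2⟫ * ψ p ∂(μ.prod (ProbabilityTheory.stdGaussian E)) := by
  have hslice (x y : E) : HasFDerivAt (fun z => ψ (x, z))
      ((fderiv ℝ ψ (x, y)).comp (ContinuousLinearMap.inr ℝ E E)) y :=
    hψ.hasFDerivAt_comp (hasFDerivAt_prodMk_right x y)
  have hsliceC1b (x : E) : IsC1b fun z => ψ (x, z) :=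
    hψ.comp_of_hasFDerivAt_const (hasFDerivAt_prodMk_right x)
  rw [integral_prod _ (hψ.integrable_mul_fderiv_snd hxu), integral_prod _ (hψ.integrable_mul
    (integrable_mul_inner hxu ProbabilityTheory.IsGaussian.integrable_fun_id))]
  congr with x
  calc ∫ y, u x * fderiv ℝ ψ (x, y) (0, x) ∂(ProbabilityTheory.stdGaussian E)
    _ = u x * ∫ y, fderiv ℝ (fun z => ψ (x, z)) y x ∂(ProbabilityTheory.stdGaussian E) := by
      rw [integral_const_mul]
      simp only [(hslice x _).fderiv, ContinuousLinearMap.comp_apply,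
        ContinuousLinearMap.inr_apply]
    _ = u x * ∫ y, ψ (x, y) * ⟪x, y⟫ ∂(ProbabilityTheory.stdGaussian E) := by
      rw [(hsliceC1b x).integral_fderiv_stdGaussian]
    _ = ∫ y, u x * ⟪x, y⟫ * ψ (x, y) ∂(ProbabilityTheory.stdGaussian E) := by
      rw [← integral_const_mul]
      simp only [mul_assoc, mul_comm]

end IntegrationByParts

section Rotation

variable {E : Type*} [NormedAddCommGroup E] [NormedSpace ℝ E]

lemma rotation_neg_rotation (θ : ℝ) (p : E × E) :
    ContinuousLinearMap.rotation (-θ) (ContinuousLinearMap.rotation θ p) = p := by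
  have h : cos θ ^ 2 + sin θ ^ 2 = 1 := cos_sq_add_sin_sq θ
  simp only [ContinuousLinearMap.rotation_apply, cos_neg, sin_neg]
  ext
  · linear_combination (norm := module) h • p.1
  · linear_combination (norm := module) h • p.2

lemma norm_rotation_le (θ : ℝ) (p : E × E) :
    ‖ContinuousLinearMap.rotation θ p‖ ≤ 2 * ‖p‖ := by
  have hbound {a b : ℝ} (ha : |a| ≤ 1) (hb : |b| ≤ 1) : ‖a • p.1 + b • p.2‖ ≤ 2 * ‖p‖ := by
    calc ‖a • p.1 + b • p.2‖ ≤ |a| * ‖p.1‖ + |b| * ‖p.2‖ := by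
          simpa only [norm_smul, Real.norm_eq_abs] using norm_add_le (a • p.1) (b • p.2)
      _ ≤ 1 * ‖p‖ + 1 * ‖p‖ := by
          gcongr
          exacts [norm_fst_le p, norm_snd_le p]
      _ = 2 * ‖p‖ := by ring
  rw [ContinuousLinearMap.rotation_apply]
  exact max_le (hbound (abs_cos_le_one θ) (abs_sin_le_one θ))
    (hbound (by rw [abs_neg]; exact abs_sin_le_one θ) (abs_cos_le_one θ))

lemma hasDerivAt_rotation (p : E × E) (θ : ℝ) :
    HasDerivAt (fun α => ContinuousLinearMap.rotation α p)
      (ContinuousLinearMap.rotation θ (p.2, -p.1)) θ := by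
  have h := (((hasDerivAt_cos θ).smul_const p.1).add ((hasDerivAt_sin θ).smul_const p.2)).prodMk
    (((hasDerivAt_sin θ).neg.smul_const p.1).add ((hasDerivAt_cos θ).smul_const p.2))
  refine (h.congr_deriv ?_).congr_of_eventuallyEq (.of_forall fun α => ?_)
  · rw [ContinuousLinearMap.rotation_apply]
    ext <;> simp only <;> module
  · exact ContinuousLinearMap.rotation_apply α p

lemma IsC1b.hasDerivAt_comp_rotation {φ : E × E → ℝ} (hφ : IsC1b φ) (p : E × E) (θ : ℝ) :
    HasDerivAt (fun α => φ (ContinuousLinearMap.rotation α p))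
      (fderiv ℝ (fun q => φ (ContinuousLinearMap.rotation θ q)) p (p.2, -p.1)) θ := by
  rw [(hφ.hasFDerivAt_comp (ContinuousLinearMap.rotation θ).hasFDerivAt).fderiv]
  exact (hφ.differentiable _).hasFDerivAt.comp_hasDerivAt θ (hasDerivAt_rotation p θ)

lemma IsC1b.comp_rotation {φ : E × E → ℝ} (hφ : IsC1b φ) (θ : ℝ) :
    IsC1b fun p => φ (ContinuousLinearMap.rotation θ p) :=
  hφ.comp_of_hasFDerivAt_const fun _ =>
    (ContinuousLinearMap.rotation θ : E × E →L[ℝ] E × E).hasFDerivAt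

variable [FiniteDimensional ℝ E] [MeasurableSpace E] [BorelSpace E]

lemma IsC1b.hasDerivAt_integral_mul_comp_rotation {μ : Measure (E × E)} {f : E × E → ℝ}
    (hf : Integrable f μ) (hxf : Integrable (fun p => f p • p) μ) {φ : E × E → ℝ}
    (hφ : IsC1b φ) (θ : ℝ) :
    HasDerivAt (fun α => ∫ p, f p * φ (ContinuousLinearMap.rotation α p) ∂μ)
      (∫ p, f p * fderiv ℝ (fun q => φ (ContinuousLinearMap.rotation θ q)) p (p.2, -p.1) ∂μ)
      θ := by
  obtain ⟨K, hK⟩ := hφ.2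
  have hswap : Integrable (fun p => f p • (p.2, -p.1)) μ := hxf.snd.prodMk hxf.fst.neg |>.congr
    (ae_of_all _ fun p => by simp)
  refine (hasDerivAt_integral_of_dominated_loc_of_deriv_le
    (F' := fun α p => f p * fderiv ℝ (fun q => φ (ContinuousLinearMap.rotation α q)) p (p.2, -p.1))
    (bound := fun p => K * (2 * ‖f p • p‖)) Filter.univ_mem
    (.of_forall fun α => ((hφ.comp_rotation α).integrable_mul hf).1)
    ((hφ.comp_rotation θ).integrable_mul hf)
    ((hφ.comp_rotation θ).integrable_mul_fderiv hswap).1 (ae_of_all _ fun p α _ => ?_)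
    ((hxf.norm.const_mul 2).const_mul K)
    (ae_of_all _ fun p α _ => (hφ.hasDerivAt_comp_rotation p α).const_mul (f p))).2
  have hnorm : ‖(p.2, -p.1)‖ = ‖p‖ := by
    rw [Prod.norm_mk, norm_neg, max_comm, Prod.norm_def]
  rw [(hφ.hasFDerivAt_comp (ContinuousLinearMap.rotation α).hasFDerivAt).fderiv]
  calc ‖f p * fderiv ℝ φ (ContinuousLinearMap.rotation α p)
        (ContinuousLinearMap.rotation α (p.2, -p.1))‖
    _ ≤ |f p| * (K * (2 * ‖(p.2, -p.1)‖)) := by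
      rw [norm_mul, Real.norm_eq_abs]
      gcongr
      exact (ContinuousLinearMap.le_of_opNorm_le_of_le _ (hK _).2 (norm_rotation_le _ _))
    _ = K * (2 * ‖f p • p‖) := by
      rw [hnorm, norm_smul, Real.norm_eq_abs]
      ring

end Rotation

lemma integral_abs_integral_sub_le {α β : Type*} [MeasurableSpace α] [MeasurableSpace β]
    {μ : Measure α} [SFinite μ] {ν : Measure β} [IsProbabilityMeasure ν] {f : α × β → ℝ}
    {g : α → ℝ} (hf : Integrable f (μ.prod ν)) (hg : Integrable g μ) :
    ∫ x, |∫ y, f (x, y) ∂ν - g x| ∂μ ≤ ∫ p, |f p - g p.1| ∂(μ.prod ν) := by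
  have hfg : Integrable (fun p => |f p - g p.1|) (μ.prod ν) := (hf.sub (hg.comp_fst ν)).abs
  rw [integral_prod _ hfg]
  refine integral_mono_ae (hf.integral_prod_left.sub hg).abs hfg.integral_prod_left ?_
  filter_upwards [hf.prod_right_ae] with x hx
  calc |∫ y, f (x, y) ∂ν - g x| = |∫ y, (f (x, y) - g x) ∂ν| := by
        rw [integral_sub hx (integrable_const _), integral_const, probReal_univ, one_smul]
    _ ≤ ∫ y, |f (x, y) - g x| ∂ν := abs_integral_le_integral_abs

lemma integrable_of_forall_integrable_inner {α E : Type*} [MeasurableSpace α] {μ : Measure α}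
    [NormedAddCommGroup E] [InnerProductSpace ℝ E] [FiniteDimensional ℝ E] {f : α → E}
    (hf : ∀ h, Integrable (fun x => ⟪f x, h⟫) μ) : Integrable f μ := by
  let b := stdOrthonormalBasis ℝ E
  have hsum : f = fun x => ∑ i, ⟪f x, b i⟫ • b i := by
    ext1 x
    simpa only [real_inner_comm] using (b.sum_repr' (f x)).symm
  rw [hsum]
  exact integrable_finsetSum _ fun i _ => (hf (b i)).smul_const _

section GaussDeriv

variable {n : ℕ}

lemma stdGaussian_eq :
    stdGaussian n = ProbabilityTheory.stdGaussian (EuclideanSpace ℝ (Fin n)) := by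
  rw [← withDensity_stdGaussianPDF]
  simp only [stdGaussian, stdGaussianPDF, finrank_euclideanSpace_fin]

instance : ProbabilityTheory.IsGaussian (stdGaussian n) := by
  rw [stdGaussian_eq]
  infer_instance

lemma measurePreserving_rotation_stdGaussian (θ : ℝ) :
    MeasurePreserving (ContinuousLinearMap.rotation θ)
      ((stdGaussian n).prod (stdGaussian n)) ((stdGaussian n).prod (stdGaussian n)) := by
  refine ⟨(ContinuousLinearMap.continuous _).measurable,
    ProbabilityTheory.IsGaussian.map_rotation_eq_self ?_ θ⟩
  rw [stdGaussian_eq]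
  exact ProbabilityTheory.integral_id_stdGaussian

variable {u : EuclideanSpace ℝ (Fin n) → ℝ} {σ : Measure (EuclideanSpace ℝ (Fin n))}
  {ν : EuclideanSpace ℝ (Fin n) → EuclideanSpace ℝ (Fin n)}
  {φ φ' : EuclideanSpace ℝ (Fin n) → ℝ}

lemma integrable_comp_rotation (hu : Integrable u (stdGaussian n)) (θ : ℝ) :
    Integrable (fun p => u (ContinuousLinearMap.rotation θ p).1)
      ((stdGaussian n).prod (stdGaussian n)) :=
  (measurePreserving_rotation_stdGaussian θ).integrable_comp_of_integrable (hu.comp_fst _)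

lemma IsC1b.integrable_mul_inner_sub_mul_fderiv (hφ : IsC1b φ)
    (hu : Integrable u (stdGaussian n)) (hxu : Integrable (fun x => u x • x) (stdGaussian n))
    (h : EuclideanSpace ℝ (Fin n)) :
    Integrable (fun x => u x * φ x * ⟪h, x⟫ - u x * fderiv ℝ φ x h) (stdGaussian n) := by
  have hinner : Integrable (fun x => u x * ⟪h, x⟫) (stdGaussian n) := by
    simpa only [real_inner_smul_right] using hxu.const_inner (𝕜 := ℝ) h
  refine ((hφ.integrable_mul hinner).congr (ae_of_all _ fun x => mul_right_comm _ _ _)).sub ?_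
  exact hφ.integrable_mul_fderiv (hu.smul_const h)

namespace IsGaussDeriv

lemma integral_mul_inner_eq (hBV : IsGaussDeriv n u σ ν) (hu : Integrable u (stdGaussian n))
    (hxu : Integrable (fun x => u x • x) (stdGaussian n)) (hφ : IsC1b φ)
    (h : EuclideanSpace ℝ (Fin n)) :
    ∫ x, φ x * ⟪ν x, h⟫ ∂σ =
      ∫ x, (u x * φ x * ⟪h, x⟫ - u x * fderiv ℝ φ x h) ∂(stdGaussian n) := by
  have hfderiv := hφ.integrable_mul_fderiv (hu.smul_const h)
  have hinner := (hφ.integrable_mul_inner_sub_mul_fderiv hu hxu h).add hfderiv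
  simp only [sub_add_cancel, Pi.add_def] at hinner
  rw [integral_sub hinner hfderiv, hBV.2.2 φ hφ h]
  ring

lemma integral_add_mul_inner (hBV : IsGaussDeriv n u σ ν) (hu : Integrable u (stdGaussian n))
    (hxu : Integrable (fun x => u x • x) (stdGaussian n)) (hφ : IsC1b φ) (hφ' : IsC1b φ')
    (h : EuclideanSpace ℝ (Fin n)) :
    ∫ x, (φ x + φ' x) * ⟪ν x, h⟫ ∂σ = ∫ x, φ x * ⟪ν x, h⟫ ∂σ + ∫ x, φ' x * ⟪ν x, h⟫ ∂σ := by
  rw [hBV.integral_mul_inner_eq hu hxu hφ, hBV.integral_mul_inner_eq hu hxu hφ',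
    hBV.integral_mul_inner_eq hu hxu (hφ.add hφ'),
    ← integral_add (hφ.integrable_mul_inner_sub_mul_fderiv hu hxu h)
      (hφ'.integrable_mul_inner_sub_mul_fderiv hu hxu h)]
  congr with x
  rw [fderiv_fun_add (hφ.differentiable x) (hφ'.differentiable x), add_apply]
  ring

lemma integral_mul_inner_add (hBV : IsGaussDeriv n u σ ν) (hu : Integrable u (stdGaussian n))
    (hxu : Integrable (fun x => u x • x) (stdGaussian n)) (hφ : IsC1b φ)
    (h k : EuclideanSpace ℝ (Fin n)) :
    ∫ x, φ x * ⟪ν x, h + k⟫ ∂σ = ∫ x, φ x * ⟪ν x, h⟫ ∂σ + ∫ x, φ x * ⟪ν x, k⟫ ∂σ := by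
  simp_rw [hBV.integral_mul_inner_eq hu hxu hφ]
  rw [← integral_add (hφ.integrable_mul_inner_sub_mul_fderiv hu hxu h)
    (hφ.integrable_mul_inner_sub_mul_fderiv hu hxu k)]
  congr with x
  rw [inner_add_left, map_add]
  ring

lemma integral_mul_inner_eq_zero_of_not_integrable_inner (hBV : IsGaussDeriv n u σ ν)
    (hu : Integrable u (stdGaussian n)) (hxu : Integrable (fun x => u x • x) (stdGaussian n))
    (hφ : IsC1b φ) {h : EuclideanSpace ℝ (Fin n)} (hν : ¬Integrable (fun x => ⟪ν x, h⟫) σ) :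
    ∫ x, φ x * ⟪ν x, h⟫ ∂σ = 0 := by
  by_cases hi : Integrable (fun x => φ x * ⟪ν x, h⟫) σ
  · have hadd := hBV.integral_add_mul_inner hu hxu (isC1b_const 1) hφ h
    have hi1 : ¬Integrable (fun x => (1 + φ x) * ⟪ν x, h⟫) σ := fun h1 =>
      hν ((h1.sub hi).congr (ae_of_all _ fun x => by simp only [Pi.sub_apply]; ring))
    simp_rw [one_mul] at hadd
    rw [integral_undef hi1, integral_undef hν] at hadd
    linarith
  · exact integral_undef hi

lemma integral_mul_inner_eq_zero_of_not_integrable (hBV : IsGaussDeriv n u σ ν)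
    (hu : Integrable u (stdGaussian n)) (hxu : Integrable (fun x => u x • x) (stdGaussian n))
    (hφ : IsC1b φ) (hν : ¬Integrable ν σ) (k : EuclideanSpace ℝ (Fin n)) :
    ∫ x, φ x * ⟪ν x, k⟫ ∂σ = 0 := by
  obtain ⟨h, hh⟩ : ∃ h, ¬Integrable (fun x => ⟪ν x, h⟫) σ :=
    not_forall.1 (mt integrable_of_forall_integrable_inner hν)
  by_cases hk : Integrable (fun x => ⟪ν x, k⟫) σ
  · have hhk : ¬Integrable (fun x => ⟪ν x, h + k⟫) σ := fun h1 =>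
      hh ((h1.sub hk).congr (ae_of_all _ fun x => by simp [inner_add_right]))
    have hadd := hBV.integral_mul_inner_add hu hxu hφ h k
    rw [hBV.integral_mul_inner_eq_zero_of_not_integrable_inner hu hxu hφ hh,
      hBV.integral_mul_inner_eq_zero_of_not_integrable_inner hu hxu hφ hhk] at hadd
    linarith
  · exact hBV.integral_mul_inner_eq_zero_of_not_integrable_inner hu hxu hφ hk

/- With a non-integrable `ν` some Bochner integrals against `σ` take the junk value `0`; as the
other side of the defining identity is bilinear in `(φ, h)`, it then vanishes identically. -/
lemma zero_of_not_integrable (hBV : IsGaussDeriv n u σ ν) (hu : Integrable u (stdGaussian n))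
    (hxu : Integrable (fun x => u x • x) (stdGaussian n)) (hν : ¬Integrable ν σ) :
    IsGaussDeriv n u 0 ν := by
  refine ⟨inferInstance, by simp, fun φ hφ h => ?_⟩
  rw [hBV.2.2 φ hφ h, hBV.integral_mul_inner_eq_zero_of_not_integrable hu hxu hφ hν,
    integral_zero_measure]

lemma integral_mul_fderiv_fst_sub_mul_inner (hBV : IsGaussDeriv n u σ ν)
    (hu : Integrable u (stdGaussian n)) (hxu : Integrable (fun x => u x • x) (stdGaussian n))
    {ψ : EuclideanSpace ℝ (Fin n) × EuclideanSpace ℝ (Fin n) → ℝ} (hψ : IsC1b ψ)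
    (y : EuclideanSpace ℝ (Fin n)) :
    ∫ x, (u x * fderiv ℝ ψ (x, y) (y, 0) - u x * ⟪x, y⟫ * ψ (x, y)) ∂(stdGaussian n) =
      -∫ x, ψ (x, y) * ⟪ν x, y⟫ ∂σ := by
  have hy (x : EuclideanSpace ℝ (Fin n)) := hasFDerivAt_prodMk_left (𝕜 := ℝ) x y
  rw [hBV.integral_mul_inner_eq hu hxu (hψ.comp_of_hasFDerivAt_const hy), ← integral_neg]
  congr with x
  rw [(hψ.hasFDerivAt_comp (hy x)).fderiv, real_inner_comm, ContinuousLinearMap.comp_apply,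
    ContinuousLinearMap.inl_apply]
  ring

lemma integral_mul_fderiv_swap (hBV : IsGaussDeriv n u σ ν) (hu : Integrable u (stdGaussian n))
    (hxu : Integrable (fun x => u x • x) (stdGaussian n))
    {ψ : EuclideanSpace ℝ (Fin n) × EuclideanSpace ℝ (Fin n) → ℝ} (hψ : IsC1b ψ) :
    ∫ p, u p.1 * fderiv ℝ ψ p (p.2, -p.1) ∂((stdGaussian n).prod (stdGaussian n)) =
      -∫ y, ∫ x, ψ (x, y) * ⟪ν x, y⟫ ∂σ ∂(stdGaussian n) := by
  have hid : Integrable (fun y => y) (stdGaussian n) :=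
    ProbabilityTheory.IsGaussian.integrable_fun_id
  have hfst : Integrable (fun p => u p.1 * fderiv ℝ ψ p (p.2, 0))
      ((stdGaussian n).prod (stdGaussian n)) := by
    refine hψ.integrable_mul_fderiv (f := fun p => u p.1) (v := fun p => (p.2, 0)) ?_
    simp only [Prod.smul_mk, smul_zero]
    exact (hu.smul_prod hid).prodMk (integrable_zero _ _ _)
  have hsnd : Integrable (fun p => u p.1 * fderiv ℝ ψ p (0, p.1))
      ((stdGaussian n).prod (stdGaussian n)) := hψ.integrable_mul_fderiv_snd hxu
  have hstein : ∫ p, u p.1 * fderiv ℝ ψ p (0, p.1) ∂((stdGaussian n).prod (stdGaussian n)) =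
      ∫ p, u p.1 * ⟪p.1, p.2⟫ * ψ p ∂((stdGaussian n).prod (stdGaussian n)) := by
    rw [stdGaussian_eq] at hxu ⊢
    exact hψ.integral_mul_fderiv_snd hxu
  have hinner : Integrable (fun p => u p.1 * ⟪p.1, p.2⟫ * ψ p)
      ((stdGaussian n).prod (stdGaussian n)) := hψ.integrable_mul (integrable_mul_inner hxu hid)
  calc ∫ p, u p.1 * fderiv ℝ ψ p (p.2, -p.1) ∂((stdGaussian n).prod (stdGaussian n))
    _ = ∫ p, (u p.1 * fderiv ℝ ψ p (p.2, 0) - u p.1 * fderiv ℝ ψ p (0, p.1))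
        ∂((stdGaussian n).prod (stdGaussian n)) := by
      congr with p
      rw [← mul_sub, ← map_sub, Prod.mk_sub_mk, sub_zero, zero_sub]
    _ = ∫ p, (u p.1 * fderiv ℝ ψ p (p.2, 0) - u p.1 * ⟪p.1, p.2⟫ * ψ p)
        ∂((stdGaussian n).prod (stdGaussian n)) := by
      rw [integral_sub hfst hsnd, hstein, ← integral_sub hfst hinner]
    _ = -∫ y, ∫ x, ψ (x, y) * ⟪ν x, y⟫ ∂σ ∂(stdGaussian n) := by
      rw [← integral_neg]
      exact (integral_prod_symm _ (hfst.sub hinner)).trans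
        (integral_congr_ae (ae_of_all _ (hBV.integral_mul_fderiv_fst_sub_mul_inner hu hxu hψ)))

lemma integral_norm_eq (hBV : IsGaussDeriv n u σ ν) : ∫ x, ‖ν x‖ ∂σ = σ.real Set.univ := by
  rw [integral_congr_ae hBV.2.1, integral_const, smul_eq_mul, mul_one]

lemma abs_integral_mul_fderiv_swap_le (hBV : IsGaussDeriv n u σ ν)
    (hu : Integrable u (stdGaussian n)) (hxu : Integrable (fun x => u x • x) (stdGaussian n))
    {ψ : EuclideanSpace ℝ (Fin n) × EuclideanSpace ℝ (Fin n) → ℝ} (hψ : IsC1b ψ)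
    (hψ1 : ∀ p, |ψ p| ≤ 1) :
    |∫ p, u p.1 * fderiv ℝ ψ p (p.2, -p.1) ∂((stdGaussian n).prod (stdGaussian n))| ≤
      √(2 / π) * σ.real Set.univ := by
  by_cases hν : Integrable ν σ
  · have := hBV.1
    rw [hBV.integral_mul_fderiv_swap hu hxu hψ, abs_neg, stdGaussian_eq,
      ← hBV.integral_norm_eq]
    exact abs_integral_integral_mul_inner_le hν hψ1
  · rw [(hBV.zero_of_not_integrable hu hxu hν).integral_mul_fderiv_swap hu hxu hψ]
    simp only [integral_zero_measure, integral_zero, neg_zero, abs_zero]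
    positivity

lemma abs_integral_mul_comp_rotation_sub_le (hBV : IsGaussDeriv n u σ ν)
    (hu : Integrable u (stdGaussian n)) (hxu : Integrable (fun x => u x • x) (stdGaussian n))
    {φ : EuclideanSpace ℝ (Fin n) × EuclideanSpace ℝ (Fin n) → ℝ} (hφ : IsC1b φ)
    (hφ1 : ∀ p, |φ p| ≤ 1) (θ : ℝ) :
    |∫ p, u p.1 * φ (ContinuousLinearMap.rotation θ p) ∂((stdGaussian n).prod (stdGaussian n)) -
        ∫ p, u p.1 * φ p ∂((stdGaussian n).prod (stdGaussian n))| ≤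
      √(2 / π) * σ.real Set.univ * |θ| := by
  have hid : Integrable (fun y => y) (stdGaussian n) :=
    ProbabilityTheory.IsGaussian.integrable_fun_id
  have hpu : Integrable (fun p => u p.1 • p) ((stdGaussian n).prod (stdGaussian n)) :=
    (hxu.comp_fst _).prodMk (hu.smul_prod hid)
  have hmv := convex_univ.norm_image_sub_le_of_norm_hasDerivWithin_le
    (fun α _ => (hφ.hasDerivAt_integral_mul_comp_rotation (hu.comp_fst _) hpu α).hasDerivWithinAt)
    (fun α _ => hBV.abs_integral_mul_fderiv_swap_le hu hxu (hφ.comp_rotation α)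
      fun p => hφ1 (ContinuousLinearMap.rotation α p))
    (Set.mem_univ 0) (Set.mem_univ θ)
  simpa only [Real.norm_eq_abs, sub_zero, ContinuousLinearMap.rotation_apply 0, cos_zero, sin_zero,
    one_smul, zero_smul, neg_zero, add_zero, zero_add] using hmv

lemma integral_abs_comp_rotation_sub_le (hBV : IsGaussDeriv n u σ ν)
    (hu : Integrable u (stdGaussian n)) (hxu : Integrable (fun x => u x • x) (stdGaussian n))
    (θ : ℝ) :
    ∫ p, |u (ContinuousLinearMap.rotation θ p).1 - u p.1|
        ∂((stdGaussian n).prod (stdGaussian n)) ≤ √(2 / π) * σ.real Set.univ * |θ| := by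
  have hγ : stdGaussian n ≪ volume := withDensity_absolutelyContinuous _ _
  have huθ := integrable_comp_rotation hu θ
  refine integral_abs_le_of_forall_isC1b (hγ.prod hγ) (huθ.sub (hu.comp_fst _))
    fun φ hφ hφ1 => ?_
  have hrot : ∫ p, u (ContinuousLinearMap.rotation θ p).1 * φ p
        ∂((stdGaussian n).prod (stdGaussian n)) =
      ∫ p, u p.1 * φ (ContinuousLinearMap.rotation (-θ) p)
        ∂((stdGaussian n).prod (stdGaussian n)) := by
    have hemb := (ContinuousLinearMap.continuous _).measurableEmbedding
      (Function.LeftInverse.injective (rotation_neg_rotation (E := EuclideanSpace ℝ (Fin n)) θ))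
    simpa only [rotation_neg_rotation] using
      (measurePreserving_rotation_stdGaussian θ).integral_comp hemb
        fun p => u p.1 * φ (ContinuousLinearMap.rotation (-θ) p)
  calc ∫ p, (u (ContinuousLinearMap.rotation θ p).1 - u p.1) * φ p
        ∂((stdGaussian n).prod (stdGaussian n))
    _ = ∫ p, u p.1 * φ (ContinuousLinearMap.rotation (-θ) p)
          ∂((stdGaussian n).prod (stdGaussian n)) -
        ∫ p, u p.1 * φ p ∂((stdGaussian n).prod (stdGaussian n)) := by
      simp_rw [sub_mul]
      rw [integral_sub (hφ.integrable_mul huθ) (hφ.integrable_mul (hu.comp_fst _)), hrot]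
    _ ≤ √(2 / π) * σ.real Set.univ * |-θ| :=
      (le_abs_self _).trans (hBV.abs_integral_mul_comp_rotation_sub_le hu hxu hφ hφ1 (-θ))
    _ = √(2 / π) * σ.real Set.univ * |θ| := by rw [abs_neg]

end IsGaussDeriv

end GaussDeriv

lemma exp_neg_sq (s : ℝ) : rexp (-s) ^ 2 = rexp (-2 * s) := by
  rw [← Real.exp_nat_mul, Nat.cast_ofNat, mul_neg, neg_mul]

lemma integral_exp_neg_div_sqrt {t : ℝ} (ht : 0 ≤ t) :
    ∫ s in (0 : ℝ)..t, rexp (-s) / √(1 - rexp (-2 * s)) = arccos (rexp (-t)) := by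
  have hderiv : ∀ s ∈ Set.Ioo 0 t, HasDerivAt (fun s => arccos (rexp (-s)))
      (rexp (-s) / √(1 - rexp (-2 * s))) s := by
    intro s hs
    have hlt : rexp (-s) < 1 := Real.exp_lt_one_iff.2 (neg_neg_of_pos hs.1)
    have hgt : -1 < rexp (-s) := neg_one_lt_zero.trans (Real.exp_pos _)
    refine ((hasDerivAt_arccos hgt.ne' hlt.ne).comp s (hasDerivAt_neg s).exp).congr_deriv ?_
    rw [exp_neg_sq]
    ring
  have hcont : ContinuousOn (fun s => arccos (rexp (-s))) (Set.Icc 0 t) :=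
    (continuous_arccos.comp (by fun_prop)).continuousOn
  have hint : IntervalIntegrable (fun s => rexp (-s) / √(1 - rexp (-2 * s))) volume 0 t :=
    (intervalIntegrable_iff_integrableOn_Ioc_of_le ht).2 <|
      intervalIntegral.integrableOn_deriv_of_nonneg hcont hderiv fun s _ => by positivity
  rw [intervalIntegral.integral_eq_sub_of_hasDerivAt_of_le ht hcont hderiv hint, neg_zero,
    Real.exp_zero, arccos_one, sub_zero]

lemma sin_arccos_exp_neg (t : ℝ) : sin (arccos (rexp (-t))) = √(1 - rexp (-2 * t)) := by
  rw [sin_arccos, exp_neg_sq]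

theorem OU_rate_BV_general (n : ℕ) (u : EuclideanSpace ℝ (Fin n) → ℝ)
    (hu : Integrable u (stdGaussian n)) (hxu : Integrable (fun x => u x • x) (stdGaussian n))
    (σ : Measure (EuclideanSpace ℝ (Fin n)))
    (ν : EuclideanSpace ℝ (Fin n) → EuclideanSpace ℝ (Fin n))
    (hBV : IsGaussDeriv n u σ ν) (t : ℝ) (ht : 0 ≤ t) :
    ∫ x, |(∫ y, u (rexp (-t) • x + √(1 - rexp (-2 * t)) • y) ∂(stdGaussian n)) - u x|
        ∂(stdGaussian n) ≤
      (√(2 / π) * ∫ s in (0 : ℝ)..t, rexp (-s) / √(1 - rexp (-2 * s))) * σ.real Set.univ := by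
  have hcos : cos (arccos (rexp (-t))) = rexp (-t) :=
    cos_arccos (neg_one_lt_zero.le.trans (Real.exp_pos _).le)
      (Real.exp_le_one_iff.2 (neg_nonpos.2 ht))
  have hjensen := integral_abs_integral_sub_le
    (integrable_comp_rotation hu (arccos (rexp (-t)))) hu
  simp only [ContinuousLinearMap.rotation_apply, hcos, sin_arccos_exp_neg] at hjensen
  have hrot := hBV.integral_abs_comp_rotation_sub_le hu hxu (arccos (rexp (-t)))
  simp only [ContinuousLinearMap.rotation_apply, hcos, sin_arccos_exp_neg,
    abs_of_nonneg (arccos_nonneg _)] at hrot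
  rw [integral_exp_neg_div_sqrt ht, mul_right_comm]
  exact hjensen.trans hrot

/-- For bounded `u ∈ BV(ℝⁿ,γ)`, `∫ |T_t u − u| dγ ≤ c_t |D_γ u|(ℝⁿ)`. -/
theorem OU_rate_BV (n : ℕ) (u : EuclideanSpace ℝ (Fin n) → ℝ)
    (hu : Measurable u) (C : ℝ) (hb : ∀ x, |u x| ≤ C)
    (σ : Measure (EuclideanSpace ℝ (Fin n)))
    (ν : EuclideanSpace ℝ (Fin n) → EuclideanSpace ℝ (Fin n))
    (hBV : IsGaussDeriv n u σ ν) (t : ℝ) (ht : 0 < t) :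
    (∫ x, |(∫ y, u (Real.exp (-t) • x + Real.sqrt (1 - Real.exp (-2 * t)) • y)
        ∂(stdGaussian n)) - u x| ∂(stdGaussian n)) ≤
      (Real.sqrt (2 / π) * ∫ s in (0:ℝ)..t, Real.exp (-s) / Real.sqrt (1 - Real.exp (-2 * s)))
        * (σ Set.univ).toReal :=
  OU_rate_BV_general n u (.of_bound hu.aestronglyMeasurable C (ae_of_all _ hb))
    (ProbabilityTheory.IsGaussian.integrable_fun_id.bdd_smul C hu.aestronglyMeasurable
      (ae_of_all _ hb)) σ ν hBV t ht.le
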